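/- Let s > 0, x ∈ ℝ², let S, S′ ⊆ ℝ² be nonempty sets, let ω ⊂ ℝ² be a finite configuration, and let d ≥ 0 be such that for every z ∈ S there exists y ∈ S′ with |z − y| ≤ d. Then for every admissible sequence (x₀, x₁, …, x_{N+1}) for A^s_ω(x, S), with N configuration points and length L, one has A^s_ω(x, S′) ≤ (L + d)²/(2s) − N. In particular, if the infimum A^s_ω(x, S) is attained by a minimizer of length L, then A^s_ω(x, S′) ≤ A^s_ω(x, S) + (2Ld + d²)/(2s). -/

import Mathlib

/-!
Given an admissible sequence for `S` with endpoint `z`, replace `z` by a point `y ∈ S'` with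
`‖z - y‖ ≤ d`. The configuration points are untouched, so the new sequence is admissible for `S'`
with the same `N`, and by the triangle inequality its length is at most `L + d`
(`pathLength_update_last_le`). Its action bounds the infimum for `S'` because the actions are
bounded below: distinctness of the interior points forces `N ≤ |cfg|`
(`IsAdmissible.le_card`, `actionInf_le`). The second claim is the first one with
`(L + d)² = L² + (2 L d + d²)` expanded.
-/

noncomputable section

/-- Points of the plane. -/
abbrev Pt := EuclideanSpace ℝ (Fin 2)

noncomputable instance : DecidableEq Pt := Classical.decEq _

/-- An admissible sequence for the configuration `cfg`, start `x` and target set `S`: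
`p 0 = x`, `p (N+1) ∈ S`, and the interior points `p 1, …, p N` are pairwise distinct
points of `cfg`. -/
def IsAdmissible (cfg : Finset Pt) (x : Pt) (S : Set Pt) (N : ℕ)
    (p : Fin (N + 2) → Pt) : Prop :=
  p 0 = x ∧ p (Fin.last (N + 1)) ∈ S ∧
    (∀ i : Fin (N + 2), i ≠ 0 → i ≠ Fin.last (N + 1) → p i ∈ cfg) ∧
    (∀ i j : Fin (N + 2), i ≠ 0 → i ≠ Fin.last (N + 1) → j ≠ 0 → j ≠ Fin.last (N + 1) →
      i ≠ j → p i ≠ p j)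

/-- The length `L` of the polygonal path through `p 0, …, p (N+1)`. -/
def pathLength (N : ℕ) (p : Fin (N + 2) → Pt) : ℝ :=
  ∑ i : Fin (N + 1), ‖p i.succ - p i.castSucc‖

/-- The action `L²/(2s) − N` of an admissible sequence. -/
def pathAction (s : ℝ) (N : ℕ) (p : Fin (N + 2) → Pt) : ℝ :=
  pathLength N p ^ 2 / (2 * s) - N

/-- The action `A^s_ω(x, S)`: the infimum of the action over admissible sequences. -/
def actionInf (cfg : Finset Pt) (s : ℝ) (x : Pt) (S : Set Pt) : ℝ :=
  sInf {a : ℝ | ∃ (N : ℕ) (p : Fin (N + 2) → Pt), IsAdmissible cfg x S N p ∧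
    a = pathAction s N p}

theorem pathLength_nonneg (N : ℕ) (p : Fin (N + 2) → Pt) : 0 ≤ pathLength N p :=
  Finset.sum_nonneg fun _ _ => norm_nonneg _

theorem IsAdmissible.le_card {cfg : Finset Pt} {x : Pt} {S : Set Pt} {N : ℕ}
    {p : Fin (N + 2) → Pt} (h : IsAdmissible cfg x S N p) : N ≤ cfg.card := by
  obtain ⟨-, -, hmem, hinj⟩ := h
  have h0 : ∀ i : Fin N, i.castSucc.succ ≠ 0 := fun i => Fin.succ_ne_zero _
  have hl : ∀ i : Fin N, i.castSucc.succ ≠ Fin.last (N + 1) := fun i hi => by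
    have := congrArg Fin.val hi
    have := i.isLt
    simp at *
  have key := Finset.card_le_card_of_injOn (s := (Finset.univ : Finset (Fin N))) (t := cfg)
    (fun i => p i.castSucc.succ) (fun i _ => hmem _ (h0 i) (hl i)) (by
      intro i _ j _ hij
      by_contra hne
      refine hinj _ _ (h0 i) (hl i) (h0 j) (hl j) ?_ hij
      intro h
      exact hne (Fin.castSucc_injective _ (Fin.succ_injective _ h)))
  simpa using key

/-- The set of actions is bounded below by `-|cfg|`, so the real-valued `sInf` in `actionInf` is a
genuine infimum. -/
theorem actionInf_le {cfg : Finset Pt} {s : ℝ} (hs : 0 < s) {x : Pt} {S : Set Pt} {N : ℕ}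
    {p : Fin (N + 2) → Pt} (h : IsAdmissible cfg x S N p) :
    actionInf cfg s x S ≤ pathAction s N p := by
  refine csInf_le ⟨-(cfg.card : ℝ), ?_⟩ ⟨N, p, h, rfl⟩
  rintro a ⟨M, q, hq, rfl⟩
  have hM : (M : ℝ) ≤ cfg.card := by exact_mod_cast hq.le_card
  have hL : 0 ≤ pathLength M q ^ 2 / (2 * s) := by positivity
  unfold pathAction
  linarith

theorem pathLength_update_last_le (N : ℕ) (p : Fin (N + 2) → Pt) (y : Pt) :
    pathLength N (Function.update p (Fin.last (N + 1)) y) ≤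
      pathLength N p + ‖p (Fin.last (N + 1)) - y‖ := by
  have hc : ∀ i : Fin (N + 1),
      Function.update p (Fin.last (N + 1)) y i.castSucc = p i.castSucc := fun i =>
    Function.update_of_ne (Fin.castSucc_lt_last i).ne _ _
  have hs : ∀ i : Fin N,
      Function.update p (Fin.last (N + 1)) y i.castSucc.succ = p i.castSucc.succ := fun i => by
    rw [Fin.succ_castSucc]
    exact hc _
  unfold pathLength
  rw [Fin.sum_univ_castSucc, Fin.sum_univ_castSucc (n := N)]
  simp only [hc, hs, Fin.succ_last, Function.update_self]
  have := norm_sub_le_norm_sub_add_norm_sub y (p (Fin.last (N + 1))) (p (Fin.last N).castSucc)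
  rw [norm_sub_rev y (p (Fin.last (N + 1)))] at this
  linarith

theorem IsAdmissible.update_last {cfg : Finset Pt} {x : Pt} {S S' : Set Pt} {N : ℕ}
    {p : Fin (N + 2) → Pt} (h : IsAdmissible cfg x S N p) {y : Pt} (hy : y ∈ S') :
    IsAdmissible cfg x S' N (Function.update p (Fin.last (N + 1)) y) := by
  obtain ⟨h0, -, hmem, hinj⟩ := h
  refine ⟨?_, ?_, ?_, ?_⟩
  · rw [Function.update_of_ne (Fin.last_pos).ne]
    exact h0
  · rwa [Function.update_self]
  · intro i hi hl
    rw [Function.update_of_ne hl]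
    exact hmem i hi hl
  · intro i j hi hil hj hjl hij
    rw [Function.update_of_ne hil, Function.update_of_ne hjl]
    exact hinj i j hi hil hj hjl hij

/-- If every point of `S` is within distance `d` of `S'`, then every admissible
sequence for `A^s_ω(x, S)` with `N` points and length `L` yields
`A^s_ω(x, S') ≤ (L + d)²/(2s) − N`; in particular if the infimum for `S` is attained by a
minimizer of length `L` then `A^s_ω(x, S') ≤ A^s_ω(x, S) + (2 L d + d²)/(2 s)`. -/
theorem action_target_stability (s : ℝ) (hs : 0 < s) (x : Pt) (S S' : Set Pt)
    (hS : S.Nonempty) (hS' : S'.Nonempty) (cfg : Finset Pt)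
    (d : ℝ) (hd : 0 ≤ d) (hclose : ∀ z ∈ S, ∃ y ∈ S', ‖z - y‖ ≤ d) :
    (∀ (N : ℕ) (p : Fin (N + 2) → Pt), IsAdmissible cfg x S N p →
      actionInf cfg s x S' ≤ (pathLength N p + d) ^ 2 / (2 * s) - N) ∧
    (∀ (N : ℕ) (p : Fin (N + 2) → Pt), IsAdmissible cfg x S N p →
      pathAction s N p = actionInf cfg s x S →
      actionInf cfg s x S' ≤ actionInf cfg s x S +
        (2 * pathLength N p * d + d ^ 2) / (2 * s)) := by
  have main : ∀ (N : ℕ) (p : Fin (N + 2) → Pt), IsAdmissible cfg x S N p →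
      actionInf cfg s x S' ≤ (pathLength N p + d) ^ 2 / (2 * s) - N := by
    intro N p hp
    obtain ⟨y, hy, hyd⟩ := hclose _ hp.2.1
    refine (actionInf_le hs (hp.update_last hy)).trans ?_
    have hL := pathLength_update_last_le N p y
    have h0 := pathLength_nonneg N (Function.update p (Fin.last (N + 1)) y)
    unfold pathAction
    gcongr
    linarith
  refine ⟨main, fun N p hp hmin => (main N p hp).trans (le_of_eq ?_)⟩
  rw [← hmin, pathAction]
  ring
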